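/- For every probability row vector p ∈ ℝ^N (nonnegative entries summing to 1), the sequence pᵀP^k converges entrywise as k → ∞, and its limit is the unique stationary probability distribution π of P; in particular the limit is independent of the initial vector p. -/

import Mathlib

open Matrix

/-- The random-walk transition matrix `H` of a bipartite graph with parts `U`, `V`
and edge relation `E`: `H i j = 1 / dᵢ` if `j` is adjacent to `i`, and `0` otherwise. -/
noncomputable def Hmat {U V : Type*} [Fintype U] [Fintype V]
    (E : U → V → Prop) [∀ u v, Decidable (E u v)] :
    Matrix (U ⊕ V) (U ⊕ V) ℝ :=
  Matrix.of fun i j =>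
    match i, j with
    | Sum.inl u, Sum.inr v =>
        if E u v then 1 / ((Finset.univ.filter fun v' => E u v').card : ℝ) else 0
    | Sum.inr v, Sum.inl u =>
        if E u v then 1 / ((Finset.univ.filter fun u' => E u' v).card : ℝ) else 0
    | _, _ => 0

/-- The block-wise teleportation matrix `M`: `M i j = 1 / xᵢ` if `j` lies in the same
part as `i` (where `xᵢ` is the size of the part containing `i`), and `0` otherwise. -/
noncomputable def Mmat (U V : Type*) [Fintype U] [Fintype V] :
    Matrix (U ⊕ V) (U ⊕ V) ℝ :=
  Matrix.of fun i j =>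
    match i, j with
    | Sum.inl _, Sum.inl _ => 1 / (Fintype.card U : ℝ)
    | Sum.inr _, Sum.inr _ => 1 / (Fintype.card V : ℝ)
    | _, _ => 0

/-- The BipartiteRank transition matrix `P = ε H + (1 - ε) M`. -/
noncomputable def Pmat {U V : Type*} [Fintype U] [Fintype V]
    (E : U → V → Prop) [∀ u v, Decidable (E u v)] (ε : ℝ) :
    Matrix (U ⊕ V) (U ⊕ V) ℝ :=
  ε • Hmat E + (1 - ε) • Mmat U V


lemma aux_l1 {ι : Type*} [Fintype ι] (Q : Matrix ι ι ℝ) (δ : ℝ)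
    (hQ : ∀ i j, δ ≤ Q i j) (hr : ∀ i, ∑ j, Q i j = 1) (x : ι → ℝ)
    (hx : δ = 0 ∨ ∑ i, x i = 0) :
    ∑ j, |(x ᵥ* Q) j| ≤ (1 - Fintype.card ι * δ) * ∑ i, |x i| := by
  have h1 : ∀ j, (x ᵥ* Q) j = ∑ i, x i * (Q i j - δ) := by
    intro j
    have : ∑ i, x i * (Q i j - δ) = ∑ i, x i * Q i j - (∑ i, x i) * δ := by
      rw [Finset.sum_mul, ← Finset.sum_sub_distrib]
      exact Finset.sum_congr rfl fun i _ => by ring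
    rw [this]
    have h0 : (∑ i, x i) * δ = 0 := by
      rcases hx with h | h <;> simp [h]
    rw [h0, sub_zero]; rfl
  calc ∑ j, |(x ᵥ* Q) j| ≤ ∑ j, ∑ i, |x i| * (Q i j - δ) := by
        refine Finset.sum_le_sum fun j _ => ?_
        rw [h1]
        refine (Finset.abs_sum_le_sum_abs _ _).trans (le_of_eq ?_)
        refine Finset.sum_congr rfl fun i _ => ?_
        rw [abs_mul, abs_of_nonneg (sub_nonneg.2 (hQ i j))]
    _ = ∑ i, |x i| * (1 - Fintype.card ι * δ) := by
        rw [Finset.sum_comm]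
        refine Finset.sum_congr rfl fun i _ => ?_
        rw [← Finset.mul_sum, Finset.sum_sub_distrib, hr]
        simp
    _ = _ := by rw [← Finset.sum_mul, mul_comm]

lemma aux_sum {ι : Type*} [Fintype ι] (Q : Matrix ι ι ℝ)
    (hr : ∀ i, ∑ j, Q i j = 1) (x : ι → ℝ) : ∑ j, (x ᵥ* Q) j = ∑ i, x i := by
  simp only [Matrix.vecMul, dotProduct]
  rw [Finset.sum_comm]
  exact Finset.sum_congr rfl fun i _ => by rw [← Finset.mul_sum, hr, mul_one]

lemma aux_norm {ι : Type*} [Fintype ι] (x : ι → ℝ) : ‖x‖ ≤ ∑ i, |x i| := by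
  refine (pi_norm_le_iff_of_nonneg (Finset.sum_nonneg fun i _ => abs_nonneg _)).2 fun i => ?_
  exact Finset.single_le_sum (f := fun i => |x i|) (fun i _ => abs_nonneg _) (Finset.mem_univ i)

lemma aux_main {ι : Type*} [Fintype ι] [DecidableEq ι] [Nonempty ι] (P : Matrix ι ι ℝ)
    (h0 : ∀ i j, 0 ≤ P i j) (hr : ∀ i, ∑ j, P i j = 1) (hpos : ∀ i j, 0 < (P * P) i j) :
    ∃ π : ι → ℝ,
      ((∀ i, 0 ≤ π i) ∧ ∑ i, π i = 1 ∧ π ᵥ* P = π) ∧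
      (∀ π' : ι → ℝ,
        ((∀ i, 0 ≤ π' i) ∧ ∑ i, π' i = 1 ∧ π' ᵥ* P = π') → π' = π) ∧
      (∀ p : ι → ℝ, (∀ i, 0 ≤ p i) → ∑ i, p i = 1 →
        Filter.Tendsto (fun k : ℕ => p ᵥ* (P ^ k)) Filter.atTop (nhds π)) := by
  have hsP := aux_sum P hr
  have hrQ : ∀ i, ∑ j, (P * P) i j = 1 := by
    intro i
    have := hsP (P i)
    rw [hr] at this
    rw [← this]; rfl
  obtain ⟨δ, hδ, hδQ⟩ : ∃ δ : ℝ, 0 < δ ∧ ∀ i j, δ ≤ (P * P) i j := by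
    obtain ⟨q, hq⟩ := Finite.exists_min (fun q : ι × ι => (P * P) q.1 q.2)
    exact ⟨_, hpos q.1 q.2, fun i j => hq (i, j)⟩
  obtain ⟨c, hc⟩ : ∃ c : ℝ, c = 1 - Fintype.card ι * δ := ⟨_, rfl⟩
  have hcard : (0 : ℝ) < Fintype.card ι := by exact_mod_cast Fintype.card_pos
  have hc1 : c < 1 := by have := mul_pos hcard hδ; linarith
  have hc0 : 0 ≤ c := by
    have i : ι := Classical.arbitrary ι
    have := Finset.sum_le_sum (s := Finset.univ) fun j _ => hδQ i j
    rw [hrQ] at this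
    simp at this
    linarith
  have hcon : ∀ x : ι → ℝ, ∑ i, x i = 0 →
      ∑ j, |(x ᵥ* P ᵥ* P) j| ≤ c * ∑ i, |x i| := by
    intro x hx
    rw [Matrix.vecMul_vecMul, hc]
    exact aux_l1 _ δ hδQ hrQ x (Or.inr hx)
  have hne : ∀ x : ι → ℝ, ∑ j, |(x ᵥ* P) j| ≤ ∑ i, |x i| := by
    intro x
    have := aux_l1 P 0 h0 hr x (Or.inl rfl)
    simpa using this
  have hstep : ∀ (x : ι → ℝ) (k : ℕ), x ᵥ* P ^ (k + 1) = x ᵥ* P ^ k ᵥ* P := by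
    intro x k
    rw [pow_succ, Matrix.vecMul_vecMul]
  have hsum : ∀ (x : ι → ℝ) (k : ℕ), ∑ i, (x ᵥ* P ^ k) i = ∑ i, x i := by
    intro x k
    induction k with
    | zero => simp
    | succ k ih => rw [hstep, hsP, ih]
  have hnn : ∀ (x : ι → ℝ), (∀ i, 0 ≤ x i) → ∀ (k : ℕ) i, 0 ≤ (x ᵥ* P ^ k) i := by
    intro x hx k
    induction k with
    | zero => simpa using hx
    | succ k ih =>
      intro i
      rw [hstep]
      exact Finset.sum_nonneg fun j _ => mul_nonneg (ih j) (h0 j i)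
  have hgeo : ∀ x : ι → ℝ, ∑ i, x i = 0 → ∀ k : ℕ,
      ∑ j, |(x ᵥ* P ^ (2 * k)) j| ≤ (∑ i, |x i|) * c ^ k := by
    intro x hx k
    induction k with
    | zero => simp
    | succ k ih =>
      rw [show 2 * (k + 1) = 2 * k + 1 + 1 by ring, hstep, hstep]
      refine (hcon _ (by rw [hsum, hx])).trans ?_
      rw [pow_succ]
      nlinarith [mul_le_mul_of_nonneg_left ih hc0]
  have hgeo' : ∀ x : ι → ℝ, ∑ i, x i = 0 → ∀ k : ℕ,
      ‖x ᵥ* P ^ k‖ ≤ (∑ i, |x i|) * c ^ (k / 2) := by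
    intro x hx k
    refine (aux_norm _).trans ?_
    rcases Nat.mod_two_eq_zero_or_one k with h | h
    · have h2 : k = 2 * (k / 2) := by omega
      conv_lhs => rw [h2]
      exact hgeo x hx _
    · have h2 : k = 2 * (k / 2) + 1 := by omega
      conv_lhs => rw [h2]
      rw [hstep]
      exact (hne _).trans (hgeo x hx _)
  have hlim : ∀ x : ι → ℝ, ∑ i, x i = 0 →
      Filter.Tendsto (fun k : ℕ => x ᵥ* P ^ k) Filter.atTop (nhds 0) := by
    intro x hx
    refine squeeze_zero_norm (hgeo' x hx) ?_
    have h1 := (tendsto_pow_atTop_nhds_zero_of_lt_one hc0 hc1).comp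
      (Nat.tendsto_div_const_atTop (n := 2) (by norm_num))
    simpa using h1.const_mul (∑ i, |x i|)
  -- existence
  let p0 : ι → ℝ := Pi.single (Classical.arbitrary ι) 1
  have hp0 : ∀ i, 0 ≤ p0 i := by
    intro i
    have : (0 : ι → ℝ) ≤ p0 := Pi.single_nonneg.2 zero_le_one
    exact this i
  have hp1 : ∑ i, p0 i = 1 := by simp [p0]
  have hcau : CauchySeq (fun k : ℕ => p0 ᵥ* P ^ (2 * k)) := by
    refine cauchySeq_of_le_geometric c (∑ i, |(p0 - p0 ᵥ* P ^ 2 : ι → ℝ) i|) hc1 fun k => ?_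
    have : p0 ᵥ* P ^ (2 * k) - p0 ᵥ* P ^ (2 * (k + 1)) = (p0 - p0 ᵥ* P ^ 2) ᵥ* P ^ (2 * k) := by
      rw [Matrix.sub_vecMul, Matrix.vecMul_vecMul, ← pow_add]
      congr 3; ring
    rw [dist_eq_norm, this]
    refine (aux_norm _).trans (hgeo _ ?_ k)
    simp only [Pi.sub_apply, Finset.sum_sub_distrib, hsum, sub_self]
  obtain ⟨π, hπ⟩ := cauchySeq_tendsto_of_complete hcau
  have hπi := tendsto_pi_nhds.1 hπ
  have hπ0 : ∀ i, 0 ≤ π i := fun i =>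
    ge_of_tendsto' (hπi i) fun k => hnn p0 hp0 _ i
  have hπ1 : ∑ i, π i = 1 := by
    have := tendsto_finsetSum Finset.univ fun i _ => hπi i
    simp only [hsum, hp1] at this
    exact tendsto_nhds_unique this tendsto_const_nhds
  have hcont : Continuous fun x : ι → ℝ => x ᵥ* P := by fun_prop
  have hd : ∑ i, (p0 - p0 ᵥ* P : ι → ℝ) i = 0 := by
    simp only [Pi.sub_apply, Finset.sum_sub_distrib, hsP, sub_self]
  have hπP : π ᵥ* P = π := by
    have h1 := (hcont.tendsto π).comp hπ
    have h2 := (hlim _ hd).comp (Filter.tendsto_id.const_mul_atTop' (show 0 < 2 by norm_num))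
    have h3 := hπ.sub h2
    rw [sub_zero] at h3
    refine tendsto_nhds_unique h1 (h3.congr fun k => ?_)
    simp only [Function.comp, id, Matrix.sub_vecMul, Matrix.vecMul_vecMul]
    rw [← pow_succ, ← pow_succ', sub_sub_cancel]
  have hπk : ∀ (q : ι → ℝ), q ᵥ* P = q → ∀ k : ℕ, q ᵥ* P ^ k = q := by
    intro q hq k
    induction k with
    | zero => simp
    | succ k ih => rw [hstep, ih, hq]
  have hconv : ∀ p : ι → ℝ, ∑ i, p i = 1 →
        Filter.Tendsto (fun k : ℕ => p ᵥ* (P ^ k)) Filter.atTop (nhds π) := by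
    intro p hp
    have h1 := (hlim (p - π) (by
      simp only [Pi.sub_apply, Finset.sum_sub_distrib, hp, hπ1, sub_self])).add_const π
    rw [zero_add] at h1
    refine h1.congr fun k => ?_
    rw [Matrix.sub_vecMul, hπk π hπP, sub_add_cancel]
  refine ⟨π, ⟨hπ0, hπ1, hπP⟩, ?_, fun p _ hp => hconv p hp⟩
  rintro q ⟨-, hq1, hq⟩
  have := hconv q hq1
  simp only [hπk q hq] at this
  exact tendsto_nhds_unique tendsto_const_nhds this

/-- For every probability row vector `p`, the sequence `pᵀ P^k` converges as `k → ∞`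
to the unique stationary probability distribution `π` of `P`; in particular the limit
is independent of `p`. -/
theorem Pmat_power_method_converges {U V : Type*} [Fintype U] [Fintype V]
    [DecidableEq U] [DecidableEq V] [Nonempty U] [Nonempty V]
    (E : U → V → Prop) [∀ u v, Decidable (E u v)]
    (hedge : ∃ u v, E u v)
    (hnoIsolU : ∀ u : U, ∃ v : V, E u v) (hnoIsolV : ∀ v : V, ∃ u : U, E u v)
    (ε : ℝ) (hε0 : 0 < ε) (hε1 : ε < 1) :
    ∃ π : (U ⊕ V) → ℝ,
      ((∀ i, 0 ≤ π i) ∧ ∑ i, π i = 1 ∧ π ᵥ* Pmat E ε = π) ∧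
      (∀ π' : (U ⊕ V) → ℝ,
        ((∀ i, 0 ≤ π' i) ∧ ∑ i, π' i = 1 ∧ π' ᵥ* Pmat E ε = π') → π' = π) ∧
      (∀ p : (U ⊕ V) → ℝ, (∀ i, 0 ≤ p i) → ∑ i, p i = 1 →
        Filter.Tendsto (fun k : ℕ => p ᵥ* (Pmat E ε ^ k)) Filter.atTop (nhds π)) := by
  have hdU : ∀ u, (0 : ℝ) < ((Finset.univ.filter fun v' => E u v').card : ℝ) := by
    intro u
    obtain ⟨v, hv⟩ := hnoIsolU u
    exact_mod_cast Finset.card_pos.2 ⟨v, by simpa using hv⟩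
  have hdV : ∀ v, (0 : ℝ) < ((Finset.univ.filter fun u' => E u' v).card : ℝ) := by
    intro v
    obtain ⟨u, hu⟩ := hnoIsolV v
    exact_mod_cast Finset.card_pos.2 ⟨u, by simpa using hu⟩
  have hU : (0 : ℝ) < Fintype.card U := by exact_mod_cast Fintype.card_pos
  have hV : (0 : ℝ) < Fintype.card V := by exact_mod_cast Fintype.card_pos
  have hε : 0 < 1 - ε := by linarith
  have hUU : ∀ u u', Pmat E ε (Sum.inl u) (Sum.inl u') = (1 - ε) * (1 / (Fintype.card U : ℝ)) := by
    intro u u'; simp [Pmat, Hmat, Mmat]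
  have hVV : ∀ u u', Pmat E ε (Sum.inr u) (Sum.inr u') = (1 - ε) * (1 / (Fintype.card V : ℝ)) := by
    intro u u'; simp [Pmat, Hmat, Mmat]
  have hUV : ∀ u v, Pmat E ε (Sum.inl u) (Sum.inr v) = ε * (if E u v then
      1 / ((Finset.univ.filter fun v' => E u v').card : ℝ) else 0) := by
    intro u v; simp [Pmat, Hmat, Mmat]
  have hVU : ∀ v u, Pmat E ε (Sum.inr v) (Sum.inl u) = ε * (if E u v then
      1 / ((Finset.univ.filter fun u' => E u' v).card : ℝ) else 0) := by
    intro v u; simp [Pmat, Hmat, Mmat]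
  have hUUp : ∀ u u', 0 < Pmat E ε (Sum.inl u) (Sum.inl u') := by
    intro u u'; rw [hUU]; positivity
  have hVVp : ∀ u u', 0 < Pmat E ε (Sum.inr u) (Sum.inr u') := by
    intro u u'; rw [hVV]; positivity
  have hUVp : ∀ u v, E u v → 0 < Pmat E ε (Sum.inl u) (Sum.inr v) := by
    intro u v h; rw [hUV, if_pos h]; exact mul_pos hε0 (one_div_pos.2 (hdU u))
  have hVUp : ∀ u v, E u v → 0 < Pmat E ε (Sum.inr v) (Sum.inl u) := by
    intro u v h; rw [hVU, if_pos h]; exact mul_pos hε0 (one_div_pos.2 (hdV v))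
  have h0 : ∀ i j, 0 ≤ Pmat E ε i j := by
    rintro (u | v) (u' | v')
    · exact (hUUp _ _).le
    · by_cases h : E u v'
      · exact (hUVp _ _ h).le
      · rw [hUV, if_neg h, mul_zero]
    · by_cases h : E u' v
      · exact (hVUp _ _ h).le
      · rw [hVU, if_neg h, mul_zero]
    · exact (hVVp _ _).le
  have hmul : ∀ i l j, 0 < Pmat E ε i l → 0 < Pmat E ε l j →
      0 < (Pmat E ε * Pmat E ε) i j := by
    intro i l j h1 h2
    rw [Matrix.mul_apply]
    exact Finset.sum_pos' (fun l _ => mul_nonneg (h0 _ _) (h0 _ _))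
      ⟨l, Finset.mem_univ _, mul_pos h1 h2⟩
  refine aux_main (Pmat E ε) h0 ?_ ?_
  · rintro (u | v)
    · rw [Fintype.sum_sum_type]
      simp only [hUU, hUV]
      rw [← Finset.mul_sum, ← Finset.mul_sum, ← Finset.sum_filter]
      simp only [Finset.sum_const, nsmul_eq_mul, Finset.card_univ]
      rw [mul_one_div_cancel hU.ne', mul_one_div_cancel (hdU u).ne']
      ring
    · rw [Fintype.sum_sum_type]
      simp only [hVV, hVU]
      rw [← Finset.mul_sum, ← Finset.mul_sum, ← Finset.sum_filter]
      simp only [Finset.sum_const, nsmul_eq_mul, Finset.card_univ]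
      rw [mul_one_div_cancel hV.ne', mul_one_div_cancel (hdV v).ne']
      ring
  · rintro (u | v) (u' | v')
    · exact hmul _ (Sum.inl u) _ (hUUp _ _) (hUUp _ _)
    · obtain ⟨w, hw⟩ := hnoIsolU u
      exact hmul _ (Sum.inr w) _ (hUVp _ _ hw) (hVVp _ _)
    · obtain ⟨w, hw⟩ := hnoIsolV v
      exact hmul _ (Sum.inl w) _ (hVUp _ _ hw) (hUUp _ _)
    · exact hmul _ (Sum.inr v) _ (hVVp _ _) (hVVp _ _)
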